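/- arXiv:2508.04439 — 2 statements merged into one kernel-verified Lean document; each statement's English description precedes it below -/
import Mathlib

section
/- Assume ℓ(C) = 1 with f_1 = x (so e_1 = 1 and e_j ≥ 2 for j ≥ 2). Let φ : S^{m+1} → S³ be the S-linear map φ(A_1,...,A_{m−1},b,c) = Σ_{j=1}^{m−1} A_j ρ_j + b σ^y + c σ^z. Then the kernel of φ is a free S-module with basis R_2,...,R_m, where for 2 ≤ j ≤ m−1 the vector R_j ∈ S^{m+1} has −x·f_{j,x} in position 1, f_j in position j, zero in the other positions among the first m−1, and (−f_{j,y}, −f_{j,z}) in the last two positions, and R_m has −f_m − x·f_{m,x} in position 1, −f_m in positions 2 through m−1, and (−f_{m,y}, −f_{m,z}) in the last two positions. That is, ker φ equals the S-submodule generated by R_2,...,R_m, and R_2,...,R_m are linearly independent over S. -/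
open MvPolynomial

noncomputable abbrev S : Type := MvPolynomial (Fin 3) ℂ

/-- The gradient `∇g = (g_x, g_y, g_z)` of a polynomial `g ∈ S = ℂ[x,y,z]`. -/
noncomputable def grad (g : S) : Fin 3 → S := fun t => pderiv t g

/-- The syzygy triple `ρ_j = Σ_{i≠j} (∏_{k≠i,j} f_k) (∇f_i × ∇f_j)`
of the 2-form `ω_j = df ∧ df_j/f_j`. -/
noncomputable def rho {m : ℕ} (F : Fin m → S) (j : Fin m) : Fin 3 → S :=
  ∑ i ∈ Finset.univ.erase j,
    (∏ k ∈ (Finset.univ.erase j).erase i, F k) • crossProduct (grad (F i)) (grad (F j))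

/-- The Jacobian syzygy module `D₀(f) = {(a,b,c) ∈ S³ : a f_x + b f_y + c f_z = 0}`. -/
noncomputable def D0 (f : S) : Submodule S (Fin 3 → S) where
  carrier := {v | ∑ t, v t * pderiv t f = 0}
  add_mem' {a b} ha hb := by
    simp only [Set.mem_setOf_eq, Pi.add_apply, add_mul, Finset.sum_add_distrib] at *
    rw [ha, hb, add_zero]
  zero_mem' := by simp
  smul_mem' c v hv := by
    simp only [Set.mem_setOf_eq, Pi.smul_apply, smul_eq_mul, mul_assoc, ← Finset.mul_sum] at *
    rw [hv, mul_zero]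

/-- The syzygy triple `σ^x = (0, f_z, −f_y)` of the 2-form `df ∧ dx`. -/
noncomputable def sigx (f : S) : Fin 3 → S := ![0, pderiv 2 f, -pderiv 1 f]
/-- The syzygy triple `σ^y = (−f_z, 0, f_x)` of the 2-form `df ∧ dy`. -/
noncomputable def sigy (f : S) : Fin 3 → S := ![-pderiv 2 f, 0, pderiv 0 f]
/-- The syzygy triple `σ^z = (f_y, −f_x, 0)` of the 2-form `df ∧ dz`. -/
noncomputable def sigz (f : S) : Fin 3 → S := ![pderiv 1 f, -pderiv 0 f, 0]

/-- The second-syzygy vectors `R_2, …, R_m ∈ S^{m+1}` (case `ℓ(C) = 1`, `f_1 = x`); the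
index `a : Fin (m−1)` corresponds to `R_{a+2}`. For `2 ≤ j ≤ m−1`, `R_j` has `−x f_{j,x}`
in position 1, `f_j` in position `j`, zeros elsewhere among the first `m−1` coordinates and
`(−f_{j,y}, −f_{j,z})` in the last two; `R_m` has `−f_m − x f_{m,x}` in position 1, `−f_m`
in positions 2,…,m−1 and `(−f_{m,y}, −f_{m,z})` in the last two. -/
noncomputable def Rvec1 {m : ℕ} (F : Fin m → S) (a : Fin (m - 1)) : (Fin (m - 1) ⊕ Fin 2) → S :=
  let j : Fin m := ⟨(a : ℕ) + 1, by have := a.isLt; omega⟩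
  Sum.elim
    (fun k => (if (k : ℕ) = 0 then -(X 0 * pderiv 0 (F j)) else 0)
      + (if (k : ℕ) = (j : ℕ) then F j else 0)
      + (if (j : ℕ) = m - 1 then -F j else 0))
    (fun t => -pderiv t.succ (F j))

/-!
Write `A ∈ S^{m+1}` as the logarithmic form `η = Σ A_j df_j/f_j + b dy + c dz`. Then `φ(A)` is the
coefficient vector of `df ∧ η`, so `φ(A) = 0` says that the polynomial form `f η` is proportional
to `df`. Contracting with the Euler field shows `f η = g df` for a polynomial `g`. Hence the
logarithmic form `η - g df/f` vanishes, and smoothness together with coprimality of the `f_j` makes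
each of its coefficients divisible by the corresponding `f_j`. Writing them as `f_j B_j`, the kernel
consists of the `A` with `A_j = f_j B_j - f_m B_m` and `b dy + c dz = -Σ B_j df_j`. Since `f_1 = x`,
the vanishing of the `dx`-coefficient determines `B_1` from `B_2, …, B_m`, which are the coordinates
of `A` in the basis `R_2, …, R_m`. They are unique: if `A = 0`, then `f_j B_j = h` for all `j` and
`Σ B_j df_j = 0`, and the Euler field gives `(Σ e_j) h = 0`.
-/

section Divisibility

variable {R : Type*} [CommMonoidWithZero R] [IsCancelMulZero R] [DecompositionMonoid R]

theorem dvd_of_isRelPrime_of_dvd_mul_of_dvd_mul {a u p q : R} (hpq : IsRelPrime p q)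
    (hp : a ∣ u * p) (hq : a ∣ u * q) : a ∣ u := by
  obtain ⟨b, c, ⟨u', rfl⟩, hcp, rfl⟩ := exists_dvd_and_dvd_of_dvd_mul hp
  rcases eq_or_ne b 0 with rfl | hb
  · simp
  · rw [mul_assoc] at hq
    have hcq : IsRelPrime c q := fun _ hdc hdq => hpq (hdc.trans hcp) hdq
    exact mul_dvd_mul_left b (hcq.dvd_of_dvd_mul_right ((mul_dvd_mul_iff_left hb).1 hq))

end Divisibility

section Derivation

variable {R A M ι : Type*} [CommSemiring R] [CommSemiring A] [AddCommMonoid M] [Algebra R A]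
  [Module A M] [Module R M] [DecidableEq ι]

theorem derivation_prod (D : Derivation R A M) (s : Finset ι) (f : ι → A) :
    D (∏ i ∈ s, f i) = ∑ i ∈ s, (∏ k ∈ s.erase i, f k) • D (f i) := by
  induction s using Finset.induction_on with
  | empty => simp
  | insert j s hj ih =>
    have herase : ∀ i ∈ s, ∏ k ∈ (insert j s).erase i, f k = f j * ∏ k ∈ s.erase i, f k := by
      intro i hi
      have hji : j ≠ i := fun h => hj (h ▸ hi)
      rw [Finset.erase_insert_of_ne hji, Finset.prod_insert (by simp [hj])]
    rw [Finset.prod_insert hj, Derivation.leibniz, ih, Finset.sum_insert hj,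
      Finset.erase_insert hj, add_comm, Finset.smul_sum]
    congr 1
    exact Finset.sum_congr rfl fun i hi => by rw [herase i hi, mul_smul]

end Derivation

section Polynomial

variable {σ : Type*}

theorem isRelPrime_X {R : Type*} [CommRing R] [IsDomain R] {i j : σ} (hij : i ≠ j) :
    IsRelPrime (X i : MvPolynomial σ R) (X j) := by
  rw [(X_prime (R := R) (i := i)).irreducible.isRelPrime_iff_not_dvd, X_dvd_X]
  exact hij

theorem ne_zero_of_smooth {R : Type*} [CommSemiring R] [Nontrivial R] [Nonempty σ]
    {g : MvPolynomial σ R} (hg : ∀ p : σ → R, (∀ t, eval p (pderiv t g) = 0) → p = 0) :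
    g ≠ 0 := by
  rintro rfl
  exact one_ne_zero (hg 1 (by simp))

variable {K : Type*} [Field K] [IsAlgClosed K] [Finite σ]

theorem X_mem_radical_of_zeroLocus_subset {I : Ideal (MvPolynomial σ K)}
    (hI : zeroLocus K I ⊆ {0}) (i : σ) : X i ∈ I.radical := by
  rw [← vanishingIdeal_zeroLocus_eq_radical (K := K)]
  intro p hp
  simp [Set.mem_singleton_iff.1 (hI hp)]

variable [Nontrivial σ]

-- The ideal of the `q i` contains powers of two distinct variables, which are coprime.
theorem dvd_of_forall_dvd_mul_of_common_zero {ι : Type*} {q : ι → MvPolynomial σ K}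
    (hq : ∀ p : σ → K, (∀ i, eval p (q i) = 0) → p = 0) {g u : MvPolynomial σ K}
    (hu : ∀ i, g ∣ u * q i) : g ∣ u := by
  have hdvd : ∀ r ∈ Ideal.span (Set.range q), g ∣ u * r := by
    intro r hr
    induction hr using Submodule.span_induction with
    | mem r hr => obtain ⟨i, rfl⟩ := hr; exact hu i
    | zero => simp
    | add r s _ _ hr hs => rw [mul_add]; exact dvd_add hr hs
    | smul c r _ hr => rw [smul_eq_mul, mul_left_comm]; exact hr.mul_left c
  have hX : ∀ k : σ, X k ∈ (Ideal.span (Set.range q)).radical := by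
    refine X_mem_radical_of_zeroLocus_subset fun p hp => hq p fun i => ?_
    simpa using hp (q i) (Ideal.subset_span ⟨i, rfl⟩)
  obtain ⟨k, l, hkl⟩ := exists_pair_ne σ
  obtain ⟨a, ha⟩ := hX k
  obtain ⟨b, hb⟩ := hX l
  exact dvd_of_isRelPrime_of_dvd_mul_of_dvd_mul (isRelPrime_X hkl).pow (hdvd _ ha) (hdvd _ hb)

theorem exists_ne_zero_eval_eq_zero_of_not_isUnit {g : MvPolynomial σ K} (hg : ¬IsUnit g) :
    ∃ p : σ → K, p ≠ 0 ∧ eval p g = 0 := by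
  by_contra! hzero
  refine hg (isUnit_of_dvd_one (dvd_of_forall_dvd_mul_of_common_zero (q := fun _ : Unit => g)
    (fun p hp => ?_) fun _ => ?_))
  · by_contra hne
    exact hzero p hne (hp ())
  · exact dvd_mul_left g 1

theorem isRelPrime_of_linearIndependent_pderiv {g h : MvPolynomial σ K}
    (hgh : ∀ p : σ → K, p ≠ 0 → eval p g = 0 → eval p h = 0 →
      LinearIndependent K ![fun t => eval p (pderiv t g), fun t => eval p (pderiv t h)]) :
    IsRelPrime g h := by
  rintro π ⟨a, rfl⟩ ⟨b, rfl⟩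
  by_contra hπ
  obtain ⟨p, hp, hπp⟩ := exists_ne_zero_eval_eq_zero_of_not_isUnit hπ
  have hgrad : ∀ c, (fun t => eval p (pderiv t (π * c))) =
      eval p c • fun t => eval p (pderiv t π) := by
    intro c
    ext t
    simp [hπp]
  have hind := LinearIndependent.pair_iff.1 (hgh p hp (by simp [hπp]) (by simp [hπp]))
  rw [hgrad a, hgrad b] at hind
  have hb : eval p b = 0 := (hind (eval p b) (-eval p a) (by
    rw [smul_smul, smul_smul, mul_comm, neg_mul, neg_smul, add_neg_cancel])).1
  have hone := (hind 0 1 (by simp [hb])).2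
  exact one_ne_zero hone

end Polynomial

section LogNumerator

open Matrix

variable {ι κ R : Type*} [Fintype ι] [DecidableEq ι]

section CommSemiring

variable [CommSemiring R]

/-- The numerator of the logarithmic form `Σ a_j ω_j / f_j + v`, i.e. its product with `∏ f_j`.
Forms are encoded by their coefficient vectors, so that `ω_j = df_j` is the gradient of `f_j`. -/
def logNumerator (f : ι → R) (ω : ι → κ → R) (a : ι → R) (v : κ → R) : κ → R :=
  ∑ j, a j • (∏ i ∈ Finset.univ.erase j, f i) • ω j + (∏ i, f i) • v

variable (f : ι → R) (ω : ι → κ → R)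

theorem logNumerator_add_const (g : R) (a : ι → R) (v : κ → R) :
    logNumerator f ω (fun j => g + a j) v =
      g • logNumerator f ω 1 0 + logNumerator f ω a v := by
  simp [logNumerator, add_smul, Finset.sum_add_distrib, Finset.smul_sum, add_assoc]

theorem logNumerator_mul (b : ι → R) (v : κ → R) :
    logNumerator f ω (fun j => f j * b j) v = (∏ i, f i) • (∑ j, b j • ω j + v) := by
  rw [logNumerator, smul_add, Finset.smul_sum]
  congr 1
  refine Finset.sum_congr rfl fun j _ => ?_
  rw [← Finset.mul_prod_erase _ f (Finset.mem_univ j), smul_smul, smul_smul, mul_right_comm]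

theorem prod_dvd_dotProduct_logNumerator [Fintype κ] {x : κ → R} (hx : ∀ j, f j ∣ x ⬝ᵥ ω j)
    (a : ι → R) (v : κ → R) : ∏ i, f i ∣ x ⬝ᵥ logNumerator f ω a v := by
  rw [logNumerator, dotProduct_add, dotProduct_sum, dotProduct_smul]
  refine dvd_add (Finset.dvd_sum fun j _ => ?_) (Dvd.intro _ rfl)
  rw [dotProduct_smul, dotProduct_smul, ← Finset.mul_prod_erase _ f (Finset.mem_univ j), mul_comm]
  exact (mul_dvd_mul_left _ (hx j)).mul_left (a j)

end CommSemiring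

section CommRing

variable [CommRing R] {f : ι → R} {ω : ι → κ → R}

theorem dvd_of_logNumerator_eq_zero [DecompositionMonoid R]
    (hf : Pairwise fun i j => IsRelPrime (f i) (f j)) {j : ι}
    (hω : ∀ u, (∀ t, f j ∣ u * ω j t) → f j ∣ u) {a : ι → R} {v : κ → R}
    (h : logNumerator f ω a v = 0) : f j ∣ a j := by
  refine hω _ fun t => ?_
  have hcoprime : IsRelPrime (f j) (∏ i ∈ Finset.univ.erase j, f i) :=
    IsRelPrime.prod_right fun i hi => hf (Finset.ne_of_mem_erase hi).symm
  refine hcoprime.dvd_of_dvd_mul_right ?_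
  have hother : f j ∣ ∑ i ∈ Finset.univ.erase j, a i * ((∏ k ∈ Finset.univ.erase i, f k) * ω i t) :=
    Finset.dvd_sum fun i hi => ((Finset.dvd_prod_of_mem f (Finset.mem_erase.2
      ⟨(Finset.ne_of_mem_erase hi).symm, Finset.mem_univ j⟩)).mul_right _).mul_left _
  have hregular : f j ∣ (∏ i, f i) * v t :=
    (Finset.dvd_prod_of_mem f (Finset.mem_univ j)).mul_right _
  have ht := congrFun h t
  simp only [logNumerator, Pi.add_apply, Finset.sum_apply, Pi.smul_apply, smul_eq_mul,
    Pi.zero_apply] at ht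
  rw [← Finset.add_sum_erase _ _ (Finset.mem_univ j), add_assoc] at ht
  rw [mul_assoc, mul_comm (ω j t)]
  exact (dvd_add_left (dvd_add hother hregular)).1 (ht ▸ dvd_zero _)

theorem logNumerator_eq_zero_iff [IsDomain R] [DecompositionMonoid R] (hf₀ : ∀ j, f j ≠ 0)
    (hf : Pairwise fun i j => IsRelPrime (f i) (f j))
    (hω : ∀ j u, (∀ t, f j ∣ u * ω j t) → f j ∣ u) {a : ι → R} {v : κ → R} :
    logNumerator f ω a v = 0 ↔
      ∃ b : ι → R, (∀ j, a j = f j * b j) ∧ v = -∑ j, b j • ω j := by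
  have hprod : ∏ i, f i ≠ 0 := Finset.prod_ne_zero_iff.2 fun i _ => hf₀ i
  constructor
  · intro h
    choose b hb using fun j => dvd_of_logNumerator_eq_zero hf (hω j) h
    obtain rfl : a = fun j => f j * b j := funext hb
    rw [logNumerator_mul, smul_eq_zero, or_iff_right hprod] at h
    exact ⟨b, fun _ => rfl, eq_neg_of_add_eq_zero_right h⟩
  · rintro ⟨b, hb, rfl⟩
    rw [funext hb, logNumerator_mul, add_neg_cancel, smul_zero]

end CommRing

end LogNumerator

section Gradient

open Matrix

theorem dotProduct_X_grad {g : S} {d : ℕ} (hg : g.IsHomogeneous d) :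
    (X : Fin 3 → S) ⬝ᵥ grad g = d * g := by
  simpa [dotProduct, grad] using hg.sum_X_mul_pderiv

-- Crossing once more with the Euler field `X` turns proportionality into an explicit factor.
theorem exists_eq_smul_grad_of_cross_eq_zero {f : S} {d : ℕ} (hf : f.IsHomogeneous d)
    (hf₀ : f ≠ 0) (hd : d ≠ 0) {w : Fin 3 → S} (hdvd : f ∣ (X : Fin 3 → S) ⬝ᵥ w)
    (hw : grad f ⨯₃ w = 0) : ∃ g : S, w = g • grad f := by
  obtain ⟨h, hh⟩ := hdvd
  have hcross : (f * h) • grad f = (d * f) • w := by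
    rw [← hh, ← dotProduct_X_grad hf, dotProduct_comm X (grad f), ← sub_eq_zero,
      ← cross_cross_eq_smul_sub_smul', hw, map_zero]
  have hdw : h • grad f = (d : S) • w := by
    rw [mul_comm (d : S), mul_smul, mul_smul] at hcross
    exact smul_right_injective _ hf₀ hcross
  have hdinv : C ((d : ℂ)⁻¹) * (d : S) = 1 := by
    rw [← map_natCast C, ← C_mul, inv_mul_cancel₀ (Nat.cast_ne_zero.2 hd), C_1]
  exact ⟨C (d : ℂ)⁻¹ * h, by rw [mul_smul, hdw, smul_smul, hdinv, one_smul]⟩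

variable {ι : Type*} [Fintype ι] {F : ι → S} {e : ι → ℕ}

theorem grad_prod [DecidableEq ι] (F : ι → S) :
    grad (∏ i, F i) = logNumerator F (fun j => grad (F j)) 1 0 := by
  ext1 t
  simp [grad, derivation_prod, logNumerator]

theorem eq_zero_of_sum_smul_grad_eq_zero (hF₀ : ∀ j, F j ≠ 0)
    (hhom : ∀ j, (F j).IsHomogeneous (e j)) (hd : ∑ j, e j ≠ 0) {b : ι → S} {h : S}
    (hb : ∀ j, F j * b j = h) (hsum : ∑ j, b j • grad (F j) = 0) (j : ι) : b j = 0 := by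
  have heuler : ((∑ j, e j : ℕ) : S) * h = 0 := calc
    ((∑ j, e j : ℕ) : S) * h = ∑ j, b j * (e j * F j) := by
      rw [Nat.cast_sum, Finset.sum_mul]
      exact Finset.sum_congr rfl fun j _ => by rw [← hb j]; ring
    _ = (X : Fin 3 → S) ⬝ᵥ ∑ j, b j • grad (F j) := by
      simp only [dotProduct_sum, dotProduct_smul, dotProduct_X_grad (hhom _), smul_eq_mul]
    _ = 0 := by rw [hsum, dotProduct_zero]
  have hh : h = 0 := (mul_eq_zero.1 heuler).resolve_left (Nat.cast_ne_zero.2 hd)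
  exact (mul_eq_zero.1 ((hb j).trans hh)).resolve_left (hF₀ j)

theorem cross_grad_prod_logNumerator_eq_zero_iff [DecidableEq ι]
    (hhom : ∀ j, (F j).IsHomogeneous (e j)) (hd : ∑ j, e j ≠ 0)
    (hsmooth : ∀ j, ∀ p : Fin 3 → ℂ, (∀ t, eval p (pderiv t (F j)) = 0) → p = 0)
    (hcoprime : Pairwise fun i j => IsRelPrime (F i) (F j)) {a : ι → S} {v : Fin 3 → S} :
    grad (∏ i, F i) ⨯₃ logNumerator F (fun j => grad (F j)) a v = 0 ↔
      ∃ (g : S) (b : ι → S), (∀ j, a j = g + F j * b j) ∧ v = -∑ j, b j • grad (F j) := by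
  have hF₀ : ∀ j, F j ≠ 0 := fun j => ne_zero_of_smooth (hsmooth j)
  constructor
  · intro h
    obtain ⟨g, hg⟩ := exists_eq_smul_grad_of_cross_eq_zero
      (IsHomogeneous.prod _ _ _ fun i _ => hhom i) (Finset.prod_ne_zero_iff.2 fun i _ => hF₀ i) hd
      (prod_dvd_dotProduct_logNumerator F _
        (fun j => dotProduct_X_grad (hhom j) ▸ dvd_mul_left _ _) a v) h
    have hzero : logNumerator F (fun j => grad (F j)) (fun j => -g + a j) v = 0 := by
      rw [logNumerator_add_const, hg, grad_prod, neg_smul, neg_add_cancel]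
    obtain ⟨b, hb, hv⟩ := (logNumerator_eq_zero_iff hF₀ hcoprime
      fun j _ => dvd_of_forall_dvd_mul_of_common_zero (hsmooth j)).1 hzero
    exact ⟨g, b, fun j => by rw [← hb j, add_neg_cancel_left], hv⟩
  · rintro ⟨g, b, hb, rfl⟩
    rw [funext hb, logNumerator_add_const, ← grad_prod, logNumerator_mul, add_neg_cancel,
      smul_zero, add_zero, map_smul, cross_self, smul_zero]

theorem smul_rho {m : ℕ} (F : Fin m → S) (j : Fin m) :
    F j • rho F j = grad (∏ i, F i) ⨯₃ grad (F j) := by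
  have hprod : ∀ i ∈ Finset.univ.erase j, F j * ∏ k ∈ (Finset.univ.erase j).erase i, F k =
      ∏ k ∈ Finset.univ.erase i, F k := fun i hi => by
    rw [Finset.erase_right_comm, Finset.mul_prod_erase]
    simpa using (Finset.ne_of_mem_erase hi).symm
  simp only [grad_prod, logNumerator, Pi.one_apply, one_smul, smul_zero, add_zero, map_sum,
    LinearMap.sum_apply, map_smul, LinearMap.smul_apply]
  rw [← Finset.add_sum_erase _ _ (Finset.mem_univ j), cross_self, smul_zero, zero_add, rho,
    Finset.smul_sum]
  exact Finset.sum_congr rfl fun i hi => by rw [smul_smul, hprod i hi]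

theorem smul_sigy_add_smul_sigz (f b c : S) :
    b • sigy f + c • sigz f = grad f ⨯₃ ![0, b, c] := by
  ext1 t
  fin_cases t <;> simp [sigy, sigz, grad, cross_apply] <;> ring

end Gradient

section Kernel

open Matrix

variable {n : ℕ}

/-- The map `φ(A_1, …, A_{m-1}, b, c) = Σ A_j ρ_j + b σ^y + c σ^z`, with `m = n + 1`. -/
noncomputable def syzygyMap (F : Fin (n + 1) → S) : (Fin n ⊕ Fin 2 → S) →ₗ[S] Fin 3 → S :=
  Fintype.linearCombination S
    (Sum.elim (fun j : Fin n => rho F j.castSucc) ![sigy (∏ i, F i), sigz (∏ i, F i)])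

theorem syzygyMap_apply (F : Fin (n + 1) → S) (A : Fin n ⊕ Fin 2 → S) :
    syzygyMap F A = (∑ j : Fin n, A (Sum.inl j) • rho F j.castSucc) +
      A (Sum.inr 0) • sigy (∏ i, F i) + A (Sum.inr 1) • sigz (∏ i, F i) := by
  simp [syzygyMap, Fintype.linearCombination_apply, Fintype.sum_sum_type, add_assoc]

theorem coe_ker_syzygyMap (F : Fin (n + 1) → S) :
    (LinearMap.ker (syzygyMap F) : Set (Fin n ⊕ Fin 2 → S)) =
      {A | (∑ j : Fin n, A (Sum.inl j) • rho F j.castSucc) +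
        A (Sum.inr 0) • sigy (∏ i, F i) + A (Sum.inr 1) • sigz (∏ i, F i) = 0} := by
  ext A
  rw [SetLike.mem_coe, LinearMap.mem_ker, syzygyMap_apply, Set.mem_ofPred_eq]

theorem prod_smul_syzygyMap (F : Fin (n + 1) → S) (A : Fin n ⊕ Fin 2 → S) :
    (∏ i, F i) • syzygyMap F A = grad (∏ i, F i) ⨯₃ logNumerator F (fun j => grad (F j))
      (Fin.snoc (fun j : Fin n => A (Sum.inl j)) (0 : S)) ![0, A (Sum.inr 0), A (Sum.inr 1)] := by
  have hrho : ∀ j : Fin n, (∏ i, F i) • A (Sum.inl j) • rho F j.castSucc =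
      grad (∏ i, F i) ⨯₃
        (A (Sum.inl j) • (∏ i ∈ Finset.univ.erase j.castSucc, F i) • grad (F j.castSucc)) := by
    intro j
    rw [map_smul, map_smul, ← smul_rho, smul_smul _ (F j.castSucc),
      Finset.prod_erase_mul _ _ (Finset.mem_univ _), smul_comm]
  rw [syzygyMap_apply, add_assoc, smul_sigy_add_smul_sigz, logNumerator, Fin.sum_univ_castSucc]
  simp only [Fin.snoc_castSucc, Fin.snoc_last, zero_smul, add_zero, map_add, map_sum, smul_add,
    Finset.smul_sum, hrho, map_smul]

theorem syzygyMap_eq_zero_iff {F : Fin (n + 1) → S} {e : Fin (n + 1) → ℕ}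
    (hhom : ∀ j, (F j).IsHomogeneous (e j)) (hd : ∑ j, e j ≠ 0)
    (hsmooth : ∀ j, ∀ p : Fin 3 → ℂ, (∀ t, eval p (pderiv t (F j)) = 0) → p = 0)
    (hcoprime : Pairwise fun i j => IsRelPrime (F i) (F j)) {A : Fin n ⊕ Fin 2 → S} :
    syzygyMap F A = 0 ↔ ∃ b : Fin (n + 1) → S,
      (∀ k : Fin n, A (Sum.inl k) = F k.castSucc * b k.castSucc - F (Fin.last n) * b (Fin.last n)) ∧
      ![0, A (Sum.inr 0), A (Sum.inr 1)] = -∑ j, b j • grad (F j) := by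
  have hprod : ∏ i, F i ≠ 0 :=
    Finset.prod_ne_zero_iff.2 fun i _ => ne_zero_of_smooth (hsmooth i)
  rw [← smul_eq_zero_iff_right hprod, prod_smul_syzygyMap,
    cross_grad_prod_logNumerator_eq_zero_iff hhom hd hsmooth hcoprime]
  simp only [Fin.forall_fin_succ', Fin.snoc_castSucc, Fin.snoc_last]
  constructor
  · rintro ⟨g, b, ⟨hA, hg⟩, hv⟩
    exact ⟨b, fun k => by linear_combination hA k - hg, hv⟩
  · rintro ⟨b, hA, hv⟩
    exact ⟨-(F (Fin.last n) * b (Fin.last n)), b,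
      ⟨fun k => by linear_combination hA k, by ring⟩, hv⟩

/-- The vectors `R_2, …, R_m` of `Rvec1` for `m = n + 1`, with `n + 1 - 1` replaced by `n` in the
index types. -/
noncomputable def secondSyzygy (F : Fin (n + 1) → S) : Fin n → Fin n ⊕ Fin 2 → S :=
  Rvec1 F

theorem secondSyzygy_inl (F : Fin (n + 1) → S) (a k : Fin n) :
    secondSyzygy F a (Sum.inl k) = (if k.castSucc = 0 then -(X 0 * pderiv 0 (F a.succ)) else 0) +
      (if a.succ = k.castSucc then F a.succ else 0) -
      (if a.succ = Fin.last n then F a.succ else 0) := by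
  have hzero : (k : ℕ) = 0 ↔ k.castSucc = 0 := by simp [Fin.ext_iff]
  have hcast : (k : ℕ) = a + 1 ↔ a.succ = k.castSucc := by simp [Fin.ext_iff, eq_comm]
  have hlast : (a : ℕ) + 1 = n + 1 - 1 ↔ a.succ = Fin.last n := by simp [Fin.ext_iff]
  have hsucc : (⟨a + 1, by omega⟩ : Fin (n + 1)) = a.succ := rfl
  simp only [secondSyzygy, Rvec1, Sum.elim_inl, hzero, hcast, hlast, hsucc]
  split_ifs <;> ring

theorem secondSyzygy_inr (F : Fin (n + 1) → S) (a : Fin n) (t : Fin 2) :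
    secondSyzygy F a (Sum.inr t) = -pderiv t.succ (F a.succ) :=
  rfl

variable {F : Fin (n + 1) → S}

theorem sum_smul_secondSyzygy_inl (hF0 : F 0 = X 0) {b : Fin (n + 1) → S}
    (hb : ∑ j, b j * pderiv 0 (F j) = 0) (k : Fin n) :
    (∑ a : Fin n, b a.succ • secondSyzygy F a) (Sum.inl k) =
      F k.castSucc * b k.castSucc - F (Fin.last n) * b (Fin.last n) := by
  have hselect : ∀ j : Fin (n + 1), j ≠ 0 →
      ∑ a : Fin n, (if a.succ = j then b a.succ * F a.succ else 0) = F j * b j := by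
    intro j hj
    obtain ⟨i, rfl⟩ := Fin.exists_succ_eq.2 hj
    simp [Fin.succ_inj, mul_comm]
  have hlast : Fin.last n ≠ 0 := ((Fin.zero_le _).trans_lt k.castSucc_lt_last).ne'
  have hb₀ : b 0 = -∑ a : Fin n, b a.succ * pderiv 0 (F a.succ) := by
    rw [Fin.sum_univ_succ, hF0, pderiv_X_self, mul_one] at hb
    exact eq_neg_of_add_eq_zero_left hb
  simp only [Finset.sum_apply, Pi.smul_apply, secondSyzygy_inl, smul_eq_mul, mul_sub, mul_add,
    mul_ite, mul_zero, Finset.sum_sub_distrib, Finset.sum_add_distrib, hselect _ hlast]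
  by_cases hk : k.castSucc = 0
  · simp only [hk, if_true, Fin.succ_ne_zero, if_false, Finset.sum_const_zero, add_zero, hF0, hb₀,
      mul_neg, Finset.mul_sum, Finset.sum_neg_distrib, mul_left_comm]
  · simp only [hk, if_false, Finset.sum_const_zero, zero_add, hselect _ hk]

theorem vec_eq_neg_sum_smul_grad_iff (hF0 : F 0 = X 0) {A : Fin n ⊕ Fin 2 → S}
    {b : Fin (n + 1) → S} :
    ![0, A (Sum.inr 0), A (Sum.inr 1)] = -∑ j, b j • grad (F j) ↔
      ∑ j, b j * pderiv 0 (F j) = 0 ∧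
        ∀ t, A (Sum.inr t) = (∑ a : Fin n, b a.succ • secondSyzygy F a) (Sum.inr t) := by
  have hR : ∀ t : Fin 2, (∑ a : Fin n, b a.succ • secondSyzygy F a) (Sum.inr t) =
      -∑ j, b j * pderiv t.succ (F j) := by
    intro t
    simp [secondSyzygy_inr, Fin.sum_univ_succ, hF0]
  simp only [hR, _root_.funext_iff, Fin.forall_fin_succ (n := 2)]
  simp [grad, eq_comm (a := (0 : S))]

theorem eq_sum_smul_secondSyzygy_iff (hF0 : F 0 = X 0) {A : Fin n ⊕ Fin 2 → S}
    {b : Fin (n + 1) → S} :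
    A = ∑ a : Fin n, b a.succ • secondSyzygy F a ∧ ∑ j, b j * pderiv 0 (F j) = 0 ↔
      (∀ k : Fin n, A (Sum.inl k) = F k.castSucc * b k.castSucc - F (Fin.last n) * b (Fin.last n)) ∧
      ![0, A (Sum.inr 0), A (Sum.inr 1)] = -∑ j, b j • grad (F j) := by
  rw [vec_eq_neg_sum_smul_grad_iff hF0]
  constructor
  · rintro ⟨rfl, hb⟩
    exact ⟨sum_smul_secondSyzygy_inl hF0 hb, hb, fun _ => rfl⟩
  · rintro ⟨hinl, hb, hinr⟩
    refine ⟨?_, hb⟩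
    ext1 i
    rcases i with k | t
    · rw [hinl, sum_smul_secondSyzygy_inl hF0 hb]
    · exact hinr t

theorem exists_extension_sum_mul_pderiv_eq_zero (hF0 : F 0 = X 0) (c : Fin n → S) :
    ∃ b : Fin (n + 1) → S, (∀ a : Fin n, b a.succ = c a) ∧ ∑ j, b j * pderiv 0 (F j) = 0 :=
  ⟨Fin.cons (-∑ a, c a * pderiv 0 (F a.succ)) c, fun _ => rfl, by
    simp [Fin.sum_univ_succ, hF0]⟩

theorem mem_span_range_secondSyzygy_iff (hF0 : F 0 = X 0) {A : Fin n ⊕ Fin 2 → S} :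
    A ∈ Submodule.span S (Set.range (secondSyzygy F)) ↔ ∃ b : Fin (n + 1) → S,
      (∀ k : Fin n, A (Sum.inl k) = F k.castSucc * b k.castSucc - F (Fin.last n) * b (Fin.last n)) ∧
      ![0, A (Sum.inr 0), A (Sum.inr 1)] = -∑ j, b j • grad (F j) := by
  simp only [← eq_sum_smul_secondSyzygy_iff hF0]
  refine (Submodule.mem_span_range_iff_exists_fun S).trans ⟨?_, ?_⟩
  · rintro ⟨c, rfl⟩
    obtain ⟨b, hbc, hb⟩ := exists_extension_sum_mul_pderiv_eq_zero hF0 c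
    exact ⟨b, Finset.sum_congr rfl fun a _ => by rw [hbc a], hb⟩
  · rintro ⟨b, rfl, -⟩
    exact ⟨fun a => b (Fin.succ a), rfl⟩

theorem linearIndependent_secondSyzygy {e : Fin (n + 1) → ℕ} (hF0 : F 0 = X 0)
    (hF : ∀ j, F j ≠ 0) (hhom : ∀ j, (F j).IsHomogeneous (e j)) (hd : ∑ j, e j ≠ 0) :
    LinearIndependent S (secondSyzygy F) := by
  refine Fintype.linearIndependent_iff.2 fun c hc a => ?_
  obtain ⟨b, hbc, hb⟩ := exists_extension_sum_mul_pderiv_eq_zero hF0 c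
  have hR : 0 = ∑ a : Fin n, b a.succ • secondSyzygy F a := by simpa only [hbc] using hc.symm
  obtain ⟨hinl, hv⟩ := (eq_sum_smul_secondSyzygy_iff hF0).1 ⟨hR, hb⟩
  have hconst : ∀ j, F j * b j = F (Fin.last n) * b (Fin.last n) :=
    Fin.lastCases rfl fun k => (sub_eq_zero.1 (hinl k).symm)
  have hsum : ∑ j, b j • grad (F j) = 0 := by
    rw [← neg_eq_zero, ← hv]
    simp
  rw [← hbc a]
  exact eq_zero_of_sum_smul_grad_eq_zero hF hhom hd hconst hsum _

end Kernel

theorem kernel_caseL1_general {n : ℕ} {F : Fin (n + 1) → S} {e : Fin (n + 1) → ℕ}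
    (hhom : ∀ j, (F j).IsHomogeneous (e j))
    (hsmooth : ∀ j, ∀ p : Fin 3 → ℂ, (∀ t, eval p (pderiv t (F j)) = 0) → p = 0)
    (hnc : ∀ i j, i ≠ j → ∀ p : Fin 3 → ℂ, p ≠ 0 → eval p (F i) = 0 → eval p (F j) = 0 →
      LinearIndependent ℂ
        ![fun t => eval p (pderiv t (F i)), fun t => eval p (pderiv t (F j))])
    (hF0 : F 0 = X 0) :
    LinearMap.ker (syzygyMap F) = Submodule.span S (Set.range (secondSyzygy F)) ∧
      LinearIndependent S (secondSyzygy F) := by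
  have hF : ∀ j, F j ≠ 0 := fun j => ne_zero_of_smooth (hsmooth j)
  have hcoprime : Pairwise fun i j => IsRelPrime (F i) (F j) :=
    fun i j hij => isRelPrime_of_linearIndependent_pderiv (hnc i j hij)
  have he0 : e 0 = 1 := (hhom 0).inj_right (hF0 ▸ isHomogeneous_X ℂ 0) (hF 0)
  have hd : ∑ j, e j ≠ 0 := fun h => by
    simp [Finset.sum_eq_zero_iff.1 h 0 (Finset.mem_univ 0)] at he0
  refine ⟨?_, linearIndependent_secondSyzygy hF0 hF hhom hd⟩
  ext A
  rw [LinearMap.mem_ker, syzygyMap_eq_zero_iff hhom hd hsmooth hcoprime]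
  exact (mem_span_range_secondSyzygy_iff hF0).symm

/-- if `ℓ(C) = 1` with `f_1 = x`, the kernel of
`φ : S^{m+1} → S³`, `φ(A_1,…,A_{m−1},b,c) = Σ A_j ρ_j + b σ^y + c σ^z`,
is the free `S`-module with basis `R_2, …, R_m`. -/
theorem kernel_caseL1
    (m : ℕ) (hm : 4 ≤ m) (F : Fin m → S) (e : Fin m → ℕ)
    (he : ∀ j, 1 ≤ e j)
    (hhom : ∀ j, (F j).IsHomogeneous (e j))
    (hsmooth : ∀ j, ∀ p : Fin 3 → ℂ,
      (∀ t, eval p (pderiv t (F j)) = 0) → p = 0)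
    (hnc : ∀ i j : Fin m, i ≠ j → ∀ p : Fin 3 → ℂ, p ≠ 0 →
      eval p (F i) = 0 → eval p (F j) = 0 →
      LinearIndependent ℂ
        ![fun t => eval p (pderiv t (F i)), fun t => eval p (pderiv t (F j))])
    (htriple : ∀ i j k : Fin m, i ≠ j → i ≠ k → j ≠ k → ∀ p : Fin 3 → ℂ, p ≠ 0 →
      ¬(eval p (F i) = 0 ∧ eval p (F j) = 0 ∧ eval p (F k) = 0))
    (hF1 : F ⟨0, by omega⟩ = X 0) (he1 : e ⟨0, by omega⟩ = 1)
    (hl1 : ∀ j : Fin m, 1 ≤ (j : ℕ) → 2 ≤ e j) :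
    {A : (Fin (m - 1) ⊕ Fin 2) → S |
        (∑ j : Fin (m - 1), A (Sum.inl j) • rho F (Fin.castLE (Nat.sub_le m 1) j))
          + A (Sum.inr 0) • sigy (∏ i, F i) + A (Sum.inr 1) • sigz (∏ i, F i) = 0}
      = (Submodule.span S (Set.range (Rvec1 F)) : Set ((Fin (m - 1) ⊕ Fin 2) → S)) ∧
    LinearIndependent S (Rvec1 F) := by
  obtain ⟨n, rfl⟩ := Nat.exists_eq_add_of_le' (show 1 ≤ m by omega)
  obtain ⟨hker, hind⟩ := kernel_caseL1_general hhom hsmooth hnc hF1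
  exact ⟨(coe_ker_syzygyMap F).symm.trans (congrArg SetLike.coe hker), hind⟩
end

section
/- If (a,b,c) ∈ D₀(f) has components a, b, c homogeneous of the same degree j with j < d−2, then (a,b,c) = (0,0,0); that is, the Jacobian syzygy module D₀(f) vanishes in all degrees below d−2. -/
open MvPolynomial

/-!
Let `v` be a syzygy of `∇f` of degree `j < d - 2`, let `X = (x, y, z)` and `n = v × X`. Along each
curve `F i = 0` the field `v` is logarithmic, so `(v × X) × ∇(F i) = (v ⬝ ∇(F i)) X - e i F i v`
vanishes modulo `F i`. By the Nullstellensatz and smoothness the partial derivatives of `F i`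
generate an ideal of grade two modulo `F i`, hence `n ≡ s i ∇(F i)` for a residue `s i`.

At a node `F i = F k = 0` the relation `s i ∇(F i) ≡ s k ∇(F k)` between independent gradients
makes the residue vanish, and there are no triple points; since complete intersections in the plane
are saturated, `s i` lies in the ideal of `F i` and `P i = ∏ k ≠ i, F k`. So `n` is congruent modulo
`F i` to a multiple of `P i ∇(F i)`, whose entries have degree `d - 1`, whereas `n` has degree
`j + 1 < d - 1`. Therefore every `F i` divides `n`, hence so does `f`, and `n = 0` by degree.
Finally `0 = (v × X) × ∇f = -d f v` by Euler's identity.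
-/

section Grade

open scoped Matrix

variable {R : Type*} [CommRing R] {ι κ : Type*}

/-- The ideal generated by the family `a` has grade at least two, encoded as the vanishing of the
Koszul cohomology of `a` in degrees zero and one: `a` has no nonzero annihilator, and the only
families proportional to `a` are its multiples. -/
structure HasGradeTwo (a : ι → R) : Prop where
  eq_zero : ∀ r, (∀ i, a i * r = 0) → r = 0
  exists_eq_smul : ∀ n : ι → R, (∀ i j, a i * n j = a j * n i) → ∃ s : R, n = s • a

namespace HasGradeTwo

theorem of_mem_span {a : ι → R} {b : κ → R} [Finite κ] (ha : HasGradeTwo a)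
    (hab : ∀ i, a i ∈ Ideal.span (Set.range b)) : HasGradeTwo b := by
  have := Fintype.ofFinite κ
  choose c hc using fun i => Ideal.mem_span_range_iff_exists_fun.mp (hab i)
  have eq_zero : ∀ r, (∀ k, b k * r = 0) → r = 0 := fun r hr =>
    ha.eq_zero r fun i => by
      simp only [← hc, Finset.sum_mul, mul_assoc, hr, mul_zero, Finset.sum_const_zero]
  refine ⟨eq_zero, fun n hn => ?_⟩
  have hswap : ∀ i l, a i * n l = (∑ k, c i k * n k) * b l := fun i l => by
    simp only [← hc, Finset.sum_mul, mul_assoc, mul_comm (n _), hn l]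
  obtain ⟨s, hs⟩ := ha.exists_eq_smul (fun i => ∑ k, c i k * n k) fun i j =>
    calc a i * ∑ k, c j k * n k
      _ = ∑ k, (∑ l, c i l * n l) * (c j k * b k) := by
        rw [Finset.mul_sum]
        exact Finset.sum_congr rfl fun k _ => by rw [mul_left_comm, hswap, mul_left_comm]
      _ = a j * ∑ l, c i l * n l := by rw [← Finset.mul_sum, hc, mul_comm]
  refine ⟨s, funext fun l => sub_eq_zero.mp (ha.eq_zero _ fun i => ?_)⟩
  have hsi : ∑ k, c i k * n k = s * a i := congrFun hs i
  rw [mul_sub, hswap, hsi, Pi.smul_apply, smul_eq_mul]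
  ring

theorem dvd_of_forall_dvd_mul {a : ι → R} (ha : HasGradeTwo a) {g h : R} (hg : IsLeftRegular g)
    (hdvd : ∀ i, g ∣ a i * h) : g ∣ h := by
  choose q hq using hdvd
  obtain ⟨t, rfl⟩ := ha.exists_eq_smul q fun i j => hg <| by
    linear_combination a j * hq i - a i * hq j
  refine ⟨t, sub_eq_zero.mp (ha.eq_zero _ fun i => ?_)⟩
  rw [mul_sub, hq, Pi.smul_apply, smul_eq_mul]
  ring

theorem of_isRelPrime [IsDomain R] [DecompositionMonoid R] {a : ι → R} {i j : ι} (hi : a i ≠ 0)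
    (hij : IsRelPrime (a i) (a j)) : HasGradeTwo a where
  eq_zero r hr := (mul_eq_zero.mp (hr i)).resolve_left hi
  exists_eq_smul n hn := by
    obtain ⟨s, hs⟩ : a i ∣ n i := hij.dvd_of_dvd_mul_left ⟨n j, (hn i j).symm⟩
    refine ⟨s, funext fun k => mul_left_cancel₀ hi ?_⟩
    rw [hn, hs, Pi.smul_apply, smul_eq_mul]
    ring

end HasGradeTwo

theorem hasGradeTwo_mk_iff {f : R} {a : ι → R} :
    (HasGradeTwo fun i => Ideal.Quotient.mk (Ideal.span {f}) (a i)) ↔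
      (∀ r, (∀ i, f ∣ a i * r) → f ∣ r) ∧
        ∀ n : ι → R, (∀ i j, f ∣ a i * n j - a j * n i) → ∃ s, ∀ i, f ∣ n i - s * a i := by
  simp only [← Ideal.Quotient.eq_zero_iff_dvd, map_sub, map_mul, sub_eq_zero]
  have hsurj := Ideal.Quotient.mk_surjective (I := Ideal.span {f})
  constructor
  · refine fun ha => ⟨fun r => ha.eq_zero _, fun n hn => ?_⟩
    obtain ⟨s, hs⟩ := ha.exists_eq_smul _ hn
    obtain ⟨s, rfl⟩ := hsurj s
    exact ⟨s, congrFun hs⟩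
  · refine fun ha => ⟨hsurj.forall.mpr ha.1, hsurj.comp_left.forall.mpr fun n hn => ?_⟩
    obtain ⟨s, hs⟩ := ha.2 n hn
    exact ⟨Ideal.Quotient.mk _ s, funext hs⟩

theorem forall_dvd_cross_iff {f : R} {a b : Fin 3 → R} :
    (∀ t, f ∣ (a ⨯₃ b) t) ↔ ∀ i j, f ∣ a i * b j - a j * b i := by
  refine ⟨fun h i j => ?_, fun h t => by fin_cases t <;> exact h _ _⟩
  have h₀ : f ∣ a 1 * b 2 - a 2 * b 1 := h 0
  have h₁ : f ∣ a 2 * b 0 - a 0 * b 2 := h 1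
  have h₂ : f ∣ a 0 * b 1 - a 1 * b 0 := h 2
  fin_cases i <;> fin_cases j <;> dsimp only [Fin.isValue, Fin.mk_one] <;>
    first | assumption | rw [dvd_sub_comm]; assumption | simp

theorem cross_eq_zero_iff_forall_mul_eq_mul {a b : Fin 3 → R} :
    a ⨯₃ b = 0 ↔ ∀ i j, a i * b j = a j * b i := by
  simpa only [zero_dvd_iff, sub_eq_zero, funext_iff, Pi.zero_apply]
    using forall_dvd_cross_iff (f := (0 : R))

theorem mk_dvd_mk_iff_mem_span_pair {f g h : R} :
    Ideal.Quotient.mk (Ideal.span {f}) g ∣ Ideal.Quotient.mk (Ideal.span {f}) h ↔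
      h ∈ Ideal.span {f, g} := by
  rw [Ideal.mem_span_pair, dvd_def, Ideal.Quotient.mk_surjective.exists]
  simp only [← map_mul, Ideal.Quotient.mk_eq_mk_iff_sub_mem, Ideal.mem_span_singleton, dvd_def]
  constructor
  · rintro ⟨b, a, hab⟩
    exact ⟨a, b, by linear_combination -hab⟩
  · rintro ⟨a, b, hab⟩
    exact ⟨b, a, by linear_combination -hab⟩

theorem isLeftRegular_mk_of_isRelPrime [DecompositionMonoid R] {f g : R} (hfg : IsRelPrime f g) :
    IsLeftRegular (Ideal.Quotient.mk (Ideal.span {f}) g) := by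
  rw [isLeftRegular_iff_right_eq_zero_of_mul, Ideal.Quotient.mk_surjective.forall]
  simp only [← map_mul, Ideal.Quotient.eq_zero_iff_dvd]
  exact fun r => hfg.dvd_of_dvd_mul_left

section RegularTriple

variable [IsDomain R] [DecompositionMonoid R] {a : Fin 3 → R}

theorem exists_eq_cross_of_dotProduct_eq_zero (h₀ : a 0 ≠ 0) (h₀₁ : IsRelPrime (a 0) (a 1))
    (h₂ : ∀ r, a 2 * r ∈ Ideal.span {a 0, a 1} → r ∈ Ideal.span {a 0, a 1})
    {c : Fin 3 → R} (hc : a ⬝ᵥ c = 0) : ∃ y, c = a ⨯₃ y := by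
  rw [dotProduct, Fin.sum_univ_three] at hc
  obtain ⟨p, q, hpq⟩ := Ideal.mem_span_pair.mp <| h₂ (c 2) <| Ideal.mem_span_pair.mpr
    ⟨-c 0, -c 1, by linear_combination -hc⟩
  obtain ⟨r, hr⟩ : a 0 ∣ c 1 + a 2 * q := h₀₁.dvd_of_dvd_mul_left
    ⟨-(c 0 + a 2 * p), by linear_combination hc + a 2 * hpq⟩
  have hc₀ : c 0 = a 1 * -r - a 2 * p := mul_left_cancel₀ h₀ <| by
    linear_combination hc + a 2 * hpq - a 1 * hr
  refine ⟨![-q, p, -r], ?_⟩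
  ext t
  fin_cases t
  · exact hc₀
  · change c 1 = a 2 * -q - a 0 * -r
    linear_combination hr
  · change c 2 = a 0 * p - a 1 * -q
    linear_combination -hpq

theorem hasGradeTwo_mk_of_regular (h₀ : a 0 ≠ 0) (h₀₁ : IsRelPrime (a 0) (a 1))
    (h₂ : ∀ r, a 2 * r ∈ Ideal.span {a 0, a 1} → r ∈ Ideal.span {a 0, a 1})
    {f : R} (hf : f ≠ 0) : HasGradeTwo fun i => Ideal.Quotient.mk (Ideal.span {f}) (a i) := by
  have ha : HasGradeTwo a := .of_isRelPrime h₀ h₀₁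
  refine hasGradeTwo_mk_iff.mpr
    ⟨fun r => ha.dvd_of_forall_dvd_mul (IsRegular.of_ne_zero hf).left, fun n hn => ?_⟩
  choose c hc using forall_dvd_cross_iff.mpr hn
  have hac : a ⬝ᵥ c = 0 := mul_left_cancel₀ hf <| by
    rw [mul_zero, ← smul_eq_mul, ← dotProduct_smul, ← dot_self_cross a n]
    exact congrArg _ (funext fun t => (hc t).symm)
  obtain ⟨y, rfl⟩ := exists_eq_cross_of_dotProduct_eq_zero h₀ h₀₁ h₂ hac
  have hcross : a ⨯₃ (n - f • y) = 0 := by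
    ext t
    simp [hc]
  obtain ⟨s, hs⟩ := ha.exists_eq_smul _ (cross_eq_zero_iff_forall_mul_eq_mul.mp hcross)
  refine ⟨s, fun i => ⟨y i, ?_⟩⟩
  have hsi : n i - f * y i = s * a i := congrFun hs i
  linear_combination hsi

end RegularTriple

end Grade

section Nullstellensatz

variable {σ : Type*} {K : Type*} [Field K]

theorem X_pow_mul_mem_span_X_pow_pair {R : Type*} [CommRing R] {i j k : σ} (hik : i ≠ k)
    (hjk : j ≠ k) {N : ℕ} {r : MvPolynomial σ R}
    (hr : X k ^ N * r ∈ Ideal.span {(X i : MvPolynomial σ R) ^ N, X j ^ N}) :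
    r ∈ Ideal.span {(X i : MvPolynomial σ R) ^ N, X j ^ N} := by
  classical
  have hspan : ({(X i : MvPolynomial σ R) ^ N, X j ^ N} : Set (MvPolynomial σ R)) =
      (fun s => monomial s (1 : R)) '' {Finsupp.single i N, Finsupp.single j N} := by
    rw [Set.image_pair, X_pow_eq_monomial, X_pow_eq_monomial]
  simp only [hspan, mem_ideal_span_monomial_image, Set.mem_insert_iff, Set.mem_singleton_iff,
    exists_eq_or_imp, exists_eq_left, Finsupp.single_le_iff] at hr ⊢
  intro d hd
  simpa [hik, hjk, hik.symm, hjk.symm] using hr (Finsupp.single k N + d) (by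
    rwa [mem_support_iff, X_pow_eq_monomial, coeff_monomial_mul, one_mul, ← mem_support_iff])

theorem isRelPrime_X_pow {i j : σ} (hij : i ≠ j) (N : ℕ) :
    IsRelPrime ((X i : MvPolynomial σ K) ^ N) (X j ^ N) := by
  refine IsRelPrime.pow ?_
  rwa [(X_prime (R := K) (i := i)).irreducible.isRelPrime_iff_not_dvd, X_dvd_X]

theorem hasGradeTwo_mk_X_pow [Fintype σ] (hσ : 3 ≤ Fintype.card σ) {f : MvPolynomial σ K}
    (hf : f ≠ 0) (N : ℕ) :
    HasGradeTwo fun i : σ => Ideal.Quotient.mk (Ideal.span {f}) (X i ^ N) := by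
  obtain ⟨φ⟩ : Nonempty (Fin 3 ↪ σ) :=
    Function.Embedding.nonempty_of_card_le (by rwa [Fintype.card_fin])
  have hφ : HasGradeTwo fun t => Ideal.Quotient.mk (Ideal.span {f}) (X (φ t) ^ N) :=
    hasGradeTwo_mk_of_regular (a := fun t => X (φ t) ^ N) (pow_ne_zero _ (X_ne_zero _))
      (isRelPrime_X_pow (φ.injective.ne (by decide)) N)
      (fun r => X_pow_mul_mem_span_X_pow_pair (φ.injective.ne (by decide))
        (φ.injective.ne (by decide))) hf
  exact hφ.of_mem_span fun t => Ideal.subset_span ⟨φ t, rfl⟩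

variable [IsAlgClosed K]

theorem exists_forall_X_pow_mem [Finite σ] (I : Ideal (MvPolynomial σ K))
    (hI : ∀ p : σ → K, p ≠ 0 → ∃ g ∈ I, eval p g ≠ 0) :
    ∃ N : ℕ, ∀ i, X i ^ N ∈ I := by
  have := Fintype.ofFinite σ
  have hradical : ∀ i, X i ∈ I.radical := by
    intro i
    rw [← vanishingIdeal_zeroLocus_eq_radical (K := K), mem_vanishingIdeal_iff]
    intro p hp
    have hp₀ : p = 0 := by
      by_contra hne
      obtain ⟨g, hg, hgp⟩ := hI p hne
      exact hgp (mem_zeroLocus_iff.mp hp g hg)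
    simp [hp₀]
  choose n hn using hradical
  exact ⟨∑ i, n i, fun i => I.mem_of_dvd
    (pow_dvd_pow _ (Finset.single_le_sum (fun _ _ => Nat.zero_le _) (Finset.mem_univ i))) (hn i)⟩

theorem hasGradeTwo_mk_of_forall_eval_ne_zero [Fintype σ] (hσ : 3 ≤ Fintype.card σ) {κ : Type*}
    [Finite κ] {f : MvPolynomial σ K} (hf : f ≠ 0) {g : κ → MvPolynomial σ K}
    (hg : ∀ p, p ≠ 0 → ∃ k, eval p (g k) ≠ 0) :
    HasGradeTwo fun k => Ideal.Quotient.mk (Ideal.span {f}) (g k) := by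
  obtain ⟨N, hN⟩ := exists_forall_X_pow_mem (Ideal.span (Set.range g)) fun p hp =>
    have ⟨k, hk⟩ := hg p hp
    ⟨g k, Ideal.subset_span ⟨k, rfl⟩, hk⟩
  refine (hasGradeTwo_mk_X_pow hσ hf N).of_mem_span fun i => ?_
  have := Ideal.mem_map_of_mem (Ideal.Quotient.mk (Ideal.span {f})) (hN i)
  rwa [Ideal.map_span, ← Set.range_comp] at this

theorem mem_span_pair_of_forall_exists_mul_mem [Fintype σ] (hσ : 3 ≤ Fintype.card σ)
    {f g h : MvPolynomial σ K} (hf : f ≠ 0) (hfg : IsRelPrime f g)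
    (hlocal : ∀ p, p ≠ 0 → ∃ x, x * h ∈ Ideal.span {f, g} ∧ eval p x ≠ 0) :
    h ∈ Ideal.span {f, g} := by
  obtain ⟨N, hN⟩ := exists_forall_X_pow_mem ((Ideal.span {f, g}).colon {h}) (by
    simpa only [Submodule.mem_colon_singleton, smul_eq_mul] using hlocal)
  rw [← mk_dvd_mk_iff_mem_span_pair]
  refine (hasGradeTwo_mk_X_pow hσ hf N).dvd_of_forall_dvd_mul
    (isLeftRegular_mk_of_isRelPrime hfg) fun i => ?_
  rw [← map_mul, mk_dvd_mk_iff_mem_span_pair]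
  exact Submodule.mem_colon_singleton.mp (hN i)

end Nullstellensatz

section Homogeneous

variable {σ R : Type*} [CommSemiring R]

attribute [local instance] MvPolynomial.gradedAlgebra

theorem dvd_of_eq_mul_add_mul_of_isHomogeneous {n k l : ℕ} {h f q u r : MvPolynomial σ R}
    (hh : h.IsHomogeneous n) (hf : f.IsHomogeneous k) (hq : q.IsHomogeneous l) (hnl : n < l)
    (heq : h = q * u + f * r) : f ∣ h := by
  have hcomp := congrArg
    (fun x => ((DirectSum.decompose (homogeneousSubmodule σ R) x) n : MvPolynomial σ R)) heq
  simp only [DirectSum.decompose_add, DirectSum.add_apply, Submodule.coe_add] at hcomp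
  rw [DirectSum.coe_decompose_mul_of_left_mem_of_not_le _
      ((mem_homogeneousSubmodule _ _).mpr hq) hnl.not_ge, zero_add,
    DirectSum.decompose_of_mem_same _ ((mem_homogeneousSubmodule _ _).mpr hh),
    DirectSum.coe_decompose_mul_of_left_mem _ _ ((mem_homogeneousSubmodule _ _).mpr hf)] at hcomp
  rw [hcomp]
  split_ifs
  · exact dvd_mul_right _ _
  · exact dvd_zero _

theorem eq_zero_of_dvd_of_isHomogeneous_of_lt {n l : ℕ} {h f : MvPolynomial σ R}
    (hh : h.IsHomogeneous n) (hf : f.IsHomogeneous l) (hnl : n < l) (hfh : f ∣ h) : h = 0 := by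
  obtain ⟨r, hr⟩ := hfh
  exact zero_dvd_iff.mp <| dvd_of_eq_mul_add_mul_of_isHomogeneous hh (isHomogeneous_zero _ _ 0) hf
    hnl (r := 0) (by rw [hr, zero_mul, add_zero])

end Homogeneous

section Gradient

open scoped Matrix

variable {σ R : Type*} [CommSemiring R]

/-- The gradient of a polynomial in any number of variables, with formal partial derivatives. -/
noncomputable def formalGradient (f : MvPolynomial σ R) : σ → MvPolynomial σ R :=
  fun t => pderiv t f

theorem formalGradient_mul (f g : MvPolynomial σ R) :
    formalGradient (f * g) = f • formalGradient g + g • formalGradient f :=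
  funext fun t => (pderiv t).leibniz f g

theorem X_dotProduct_formalGradient [Fintype σ] {f : MvPolynomial σ R} {n : ℕ}
    (hf : f.IsHomogeneous n) : X ⬝ᵥ formalGradient f = n • f :=
  hf.sum_X_mul_pderiv

theorem dvd_dotProduct_formalGradient_of_dvd_mul {R : Type*} [CommRing R] [Fintype σ]
    [DecompositionMonoid (MvPolynomial σ R)] {f g : MvPolynomial σ R} (hfg : IsRelPrime f g)
    {v : σ → MvPolynomial σ R} (hv : f ∣ v ⬝ᵥ formalGradient (f * g)) :
    f ∣ v ⬝ᵥ formalGradient f := by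
  rw [formalGradient_mul, dotProduct_add, dotProduct_smul, dotProduct_smul, smul_eq_mul,
    smul_eq_mul, dvd_add_right (dvd_mul_right f _)] at hv
  exact hfg.dvd_of_dvd_mul_left hv

theorem isHomogeneous_cross {R : Type*} [CommRing R] {a b : Fin 3 → MvPolynomial σ R}
    {m n : ℕ} (ha : ∀ t, (a t).IsHomogeneous m) (hb : ∀ t, (b t).IsHomogeneous n) (t : Fin 3) :
    ((a ⨯₃ b) t).IsHomogeneous (m + n) := by
  fin_cases t <;> exact ((ha _).mul (hb _)).sub ((ha _).mul (hb _))

theorem cross_X_cross_formalGradient {R : Type*} [CommRing R] {f : MvPolynomial (Fin 3) R} {n : ℕ}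
    (hf : f.IsHomogeneous n) (v : Fin 3 → MvPolynomial (Fin 3) R) :
    (v ⨯₃ X) ⨯₃ formalGradient f = (v ⬝ᵥ formalGradient f) • X - (n • f) • v := by
  rw [cross_cross_eq_smul_sub_smul, X_dotProduct_formalGradient hf]

end Gradient

section Curves

variable {σ K : Type*} [Field K]

/-- Smoothness of the projective hypersurface `f = 0`: the partial derivatives of `f` have no
common zero away from the origin of affine space. In characteristic dividing the degree of `f` this
asks for more than smoothness, as the partial derivatives may then vanish at a point off the
hypersurface. -/
def IsSmoothHypersurface (f : MvPolynomial σ K) : Prop :=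
  ∀ p : σ → K, (∀ t, eval p (pderiv t f) = 0) → p = 0

/-- The projective hypersurfaces `f = 0` and `g = 0` cross normally: the gradients of `f` and `g`
are independent at every common zero away from the origin of affine space. -/
def MeetTransversally (f g : MvPolynomial σ K) : Prop :=
  ∀ p : σ → K, p ≠ 0 → eval p f = 0 → eval p g = 0 →
    LinearIndependent K ![fun t => eval p (pderiv t f), fun t => eval p (pderiv t g)]

/-- No three of the projective hypersurfaces `F i = 0` pass through a common point; the origin of
affine space, which represents no point, is excluded. -/
def HasNoTriplePoint {ι : Type*} (F : ι → MvPolynomial σ K) : Prop :=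
  ∀ i j k, i ≠ j → i ≠ k → j ≠ k → ∀ p : σ → K, p ≠ 0 →
    ¬(eval p (F i) = 0 ∧ eval p (F j) = 0 ∧ eval p (F k) = 0)

theorem exists_minor_ne_zero_of_linearIndependent {a b : σ → K}
    (h : LinearIndependent K ![a, b]) : ∃ t u, a t * b u - a u * b t ≠ 0 := by
  by_contra! hminor
  rw [LinearIndependent.pair_iff] at h
  have ha : ∀ t, a t = 0 := fun t => by
    have hcomb : b t • a + -a t • b = 0 := funext fun u => by
      simpa [sub_eq_add_neg, mul_comm] using hminor u t
    simpa using (h _ _ hcomb).2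
  exact one_ne_zero (h 1 0 (funext fun t => by simp [ha])).1

theorem mul_minor_mem_span_pair {R : Type*} [CommRing R] {f g s r : R} {n a b : σ → R}
    (hf : ∀ t, f ∣ n t - s * a t) (hg : ∀ t, g ∣ n t - r * b t) (t u : σ) :
    s * (a t * b u - a u * b t) ∈ Ideal.span {f, g} := by
  choose x hx using hf
  choose y hy using hg
  exact Ideal.mem_span_pair.mpr ⟨x u * b t - x t * b u, y t * b u - y u * b t, by
    linear_combination b u * hx t - b t * hx u + b t * hy u - b u * hy t⟩

theorem IsSmoothHypersurface.ne_zero [Nonempty σ] {f : MvPolynomial σ K}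
    (hf : IsSmoothHypersurface f) : f ≠ 0 := by
  rintro rfl
  exact one_ne_zero (hf 1 (by simp))

variable [IsAlgClosed K]

theorem IsSmoothHypersurface.exists_forall_dvd_sub_mul_pderiv [Fintype σ]
    (hσ : 3 ≤ Fintype.card σ) {f : MvPolynomial σ K} (hf : IsSmoothHypersurface f)
    {n : σ → MvPolynomial σ K}
    (hn : ∀ i j, f ∣ pderiv i f * n j - pderiv j f * n i) :
    ∃ s, ∀ t, f ∣ n t - s * pderiv t f := by
  have : Nonempty σ := Fintype.card_pos_iff.mp (by omega)
  have hgrade : HasGradeTwo fun t => Ideal.Quotient.mk (Ideal.span {f}) (pderiv t f) :=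
    hasGradeTwo_mk_of_forall_eval_ne_zero hσ hf.ne_zero fun p hp => by
      simpa only [not_forall] using mt (hf p) hp
  exact (hasGradeTwo_mk_iff.mp hgrade).2 n hn

theorem MeetTransversally.isRelPrime [Finite σ] [Nontrivial σ] {f g : MvPolynomial σ K}
    (h : MeetTransversally f g) : IsRelPrime f g := by
  rintro d ⟨u, rfl⟩ ⟨v, rfl⟩
  have hd : ∀ p : σ → K, p ≠ 0 → eval p d ≠ 0 := fun p hp hdp => by
    obtain ⟨t, t', hminor⟩ := exists_minor_ne_zero_of_linearIndependent
      (h p hp (by simp [hdp]) (by simp [hdp]))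
    refine hminor ?_
    simp only [Derivation.leibniz, smul_eq_mul, map_add, map_mul, hdp]
    ring
  obtain ⟨N, hN⟩ := exists_forall_X_pow_mem (Ideal.span {d}) fun p hp =>
    ⟨d, Ideal.mem_span_singleton_self d, hd p hp⟩
  obtain ⟨i, j, hij⟩ := exists_pair_ne σ
  exact isRelPrime_X_pow hij N (Ideal.mem_span_singleton.mp (hN i))
    (Ideal.mem_span_singleton.mp (hN j))

variable {ι : Type*} [Fintype ι] [DecidableEq ι]

theorem isRelPrime_prod_erase [Finite σ] [Nontrivial σ] {F : ι → MvPolynomial σ K}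
    (hF : Pairwise fun i j => MeetTransversally (F i) (F j)) (i : ι) :
    IsRelPrime (F i) (∏ k ∈ Finset.univ.erase i, F k) :=
  IsRelPrime.prod_right fun _ hk => (hF (Finset.ne_of_mem_erase hk).symm).isRelPrime

theorem mem_span_pair_prod_erase [Fintype σ] (hσ : 3 ≤ Fintype.card σ)
    {F : ι → MvPolynomial σ K} (hF₀ : ∀ i, F i ≠ 0)
    (hF : Pairwise fun i j => MeetTransversally (F i) (F j)) (htriple : HasNoTriplePoint F)
    {n : σ → MvPolynomial σ K} {s : ι → MvPolynomial σ K}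
    (hs : ∀ i t, F i ∣ n t - s i * pderiv t (F i)) (i : ι) :
    s i ∈ Ideal.span {F i, ∏ k ∈ Finset.univ.erase i, F k} := by
  have : Nontrivial σ := Fintype.one_lt_card_iff_nontrivial.mp (by omega)
  refine mem_span_pair_of_forall_exists_mul_mem hσ (hF₀ i) (isRelPrime_prod_erase hF i)
    fun p hp => ?_
  by_cases hi : eval p (F i) = 0
  swap
  · exact ⟨F i, Ideal.mul_mem_right _ _ (Ideal.subset_span (by simp)), hi⟩
  by_cases hP : eval p (∏ k ∈ Finset.univ.erase i, F k) = 0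
  swap
  · exact ⟨_, Ideal.mul_mem_right _ _ (Ideal.subset_span (by simp)), hP⟩
  obtain ⟨k, hk, hkp⟩ := Finset.prod_eq_zero_iff.mp ((map_prod (eval p) _ _).symm.trans hP)
  have hki := Finset.ne_of_mem_erase hk
  -- At a node, `s i • ∇F i` and `s k • ∇F k` are both `n` modulo both equations, so the minors of
  -- the two gradients kill `s i` there, and one of them is nonzero by transversality.
  obtain ⟨t, u, hminor⟩ := exists_minor_ne_zero_of_linearIndependent (hF hki.symm p hp hi hkp)
  set Q := ∏ l ∈ (Finset.univ.erase i).erase k, F l with hQ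
  refine ⟨Q * (pderiv t (F i) * pderiv u (F k) - pderiv u (F i) * pderiv t (F k)), ?_, ?_⟩
  · obtain ⟨a, b, hab⟩ := Ideal.mem_span_pair.mp
      (mul_minor_mem_span_pair (hs i) (hs k) t u)
    rw [← Finset.mul_prod_erase _ _ hk, Ideal.mem_span_pair]
    exact ⟨a * Q, b, by linear_combination Q * hab⟩
  · rw [map_mul, map_sub, map_mul, map_mul]
    refine mul_ne_zero ?_ hminor
    rw [hQ, map_prod, Finset.prod_ne_zero_iff]
    intro l hl hlp
    have hlk := Finset.ne_of_mem_erase hl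
    have hli := Finset.ne_of_mem_erase (Finset.mem_of_mem_erase hl)
    exact htriple i k l hki.symm hli.symm hlk.symm p hp ⟨hi, hkp, hlp⟩

end Curves

section Plane

open scoped Matrix

variable {K : Type*} [Field K] [IsAlgClosed K]

theorem exists_residue {f : MvPolynomial (Fin 3) K} (hf : IsSmoothHypersurface f) {e : ℕ}
    (hfe : f.IsHomogeneous e) {v : Fin 3 → MvPolynomial (Fin 3) K}
    (hv : f ∣ v ⬝ᵥ formalGradient f) :
    ∃ s, ∀ t, f ∣ (v ⨯₃ X) t - s * pderiv t f := by
  refine hf.exists_forall_dvd_sub_mul_pderiv (by simp) (forall_dvd_cross_iff.mp fun t => ?_)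
  change f ∣ (formalGradient f ⨯₃ (v ⨯₃ X)) t
  rw [← cross_anticomm, cross_X_cross_formalGradient hfe, Pi.neg_apply, dvd_neg]
  exact dvd_sub (hv.mul_right _) ((dvd_smul_of_dvd e dvd_rfl).mul_right _)

variable {ι : Type*} [Fintype ι] {F : ι → MvPolynomial (Fin 3) K} {e : ι → ℕ} {n : ℕ}
  {v : Fin 3 → MvPolynomial (Fin 3) K}

theorem dvd_cross_X_apply (hhom : ∀ i, (F i).IsHomogeneous (e i))
    (hsmooth : ∀ i, IsSmoothHypersurface (F i))
    (hnc : Pairwise fun i j => MeetTransversally (F i) (F j)) (htriple : HasNoTriplePoint F)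
    (hvhom : ∀ t, (v t).IsHomogeneous n) (hn : n + 2 < ∑ i, e i)
    (hv : ∀ i, F i ∣ v ⬝ᵥ formalGradient (F i)) (i : ι) (t : Fin 3) : F i ∣ (v ⨯₃ X) t := by
  classical
  choose s hs using fun i => exists_residue (hsmooth i) (hhom i) (hv i)
  obtain ⟨a, b, hab⟩ := Ideal.mem_span_pair.mp <| mem_span_pair_prod_erase (by simp)
    (fun i => (hsmooth i).ne_zero) hnc htriple hs i
  obtain ⟨c, hc⟩ := hs i t
  have hdeg : n + 1 < ∑ k ∈ Finset.univ.erase i, e k + (e i - 1) := by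
    have := Finset.add_sum_erase Finset.univ e (Finset.mem_univ i)
    omega
  refine dvd_of_eq_mul_add_mul_of_isHomogeneous (isHomogeneous_cross hvhom (isHomogeneous_X K) t)
    (hhom i) ((IsHomogeneous.prod _ F e fun k _ => hhom k).mul ((hhom i).pderiv (i := t)))
    hdeg (u := b) (r := c + a * pderiv t (F i)) ?_
  linear_combination hc - pderiv t (F i) * hab

theorem cross_X_eq_zero (hhom : ∀ i, (F i).IsHomogeneous (e i))
    (hsmooth : ∀ i, IsSmoothHypersurface (F i))
    (hnc : Pairwise fun i j => MeetTransversally (F i) (F j)) (htriple : HasNoTriplePoint F)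
    (hvhom : ∀ t, (v t).IsHomogeneous n) (hn : n + 2 < ∑ i, e i)
    (hv : ∀ i, F i ∣ v ⬝ᵥ formalGradient (F i)) : v ⨯₃ X = 0 :=
  funext fun t => eq_zero_of_dvd_of_isHomogeneous_of_lt
    (isHomogeneous_cross hvhom (isHomogeneous_X K) t)
    (IsHomogeneous.prod Finset.univ F e fun i _ => hhom i) (by omega) <|
    Fintype.prod_dvd_of_isRelPrime (fun _ _ hij => (hnc hij).isRelPrime) fun i =>
      dvd_cross_X_apply hhom hsmooth hnc htriple hvhom hn hv i t

theorem D0_vanishes_below_d_sub_two_general (hhom : ∀ i, (F i).IsHomogeneous (e i))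
    (hsmooth : ∀ i, IsSmoothHypersurface (F i))
    (hnc : Pairwise fun i j => MeetTransversally (F i) (F j)) (htriple : HasNoTriplePoint F)
    (hd : ((∑ i, e i : ℕ) : K) ≠ 0) (hn : n + 2 < ∑ i, e i)
    (hv : v ⬝ᵥ formalGradient (∏ i, F i) = 0) (hvhom : ∀ t, (v t).IsHomogeneous n) :
    v = 0 := by
  classical
  have hlog : ∀ i, F i ∣ v ⬝ᵥ formalGradient (F i) := fun i =>
    dvd_dotProduct_formalGradient_of_dvd_mul (isRelPrime_prod_erase hnc i) <| by
      rw [Finset.mul_prod_erase _ _ (Finset.mem_univ i), hv]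
      exact dvd_zero _
  have hcross : v ⨯₃ X = 0 := cross_X_eq_zero hhom hsmooth hnc htriple hvhom hn hlog
  have hsmul : ((∑ i, e i) • ∏ i, F i) • v = 0 := by
    simpa only [hcross, hv, map_zero, LinearMap.zero_apply, zero_smul, zero_sub, zero_eq_neg]
      using cross_X_cross_formalGradient (IsHomogeneous.prod Finset.univ F e fun i _ => hhom i) v
  have hcast : ((∑ i, e i : ℕ) : MvPolynomial (Fin 3) K) ≠ 0 := by
    rwa [← map_natCast (C : K →+* MvPolynomial (Fin 3) K), C_ne_zero]
  refine (smul_eq_zero.mp hsmul).resolve_left ?_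
  rw [nsmul_eq_mul]
  exact mul_ne_zero hcast (Finset.prod_ne_zero_iff.mpr fun i _ => (hsmooth i).ne_zero)

end Plane

/-- the Jacobian syzygy module `D₀(f)` vanishes in all degrees below `d−2`:
any `(a,b,c) ∈ D₀(f)` with components homogeneous of the same degree `jdeg < d−2` is zero. -/
theorem D0_vanishes_below_d_sub_two
    (m : ℕ) (hm : 4 ≤ m) (F : Fin m → S) (e : Fin m → ℕ)
    (he : ∀ j, 1 ≤ e j)
    (hhom : ∀ j, (F j).IsHomogeneous (e j))
    (hsmooth : ∀ j, ∀ p : Fin 3 → ℂ,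
      (∀ t, eval p (pderiv t (F j)) = 0) → p = 0)
    (hnc : ∀ i j : Fin m, i ≠ j → ∀ p : Fin 3 → ℂ, p ≠ 0 →
      eval p (F i) = 0 → eval p (F j) = 0 →
      LinearIndependent ℂ
        ![fun t => eval p (pderiv t (F i)), fun t => eval p (pderiv t (F j))])
    (htriple : ∀ i j k : Fin m, i ≠ j → i ≠ k → j ≠ k → ∀ p : Fin 3 → ℂ, p ≠ 0 →
      ¬(eval p (F i) = 0 ∧ eval p (F j) = 0 ∧ eval p (F k) = 0))
    (jdeg : ℕ) (hjdeg : jdeg < (∑ i, e i) - 2)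
    (v : Fin 3 → S) (hv : v ∈ D0 (∏ i, F i))
    (hvhom : ∀ t, (v t).IsHomogeneous jdeg) :
    v = 0 :=
  D0_vanishes_below_d_sub_two_general hhom hsmooth (fun i j => hnc i j) htriple
    (Nat.cast_ne_zero.mpr (by omega)) (by omega) hv hvhom
end
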